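/- arXiv:2404.13773 — 2 statements merged into one kernel-verified Lean document; each statement's English description precedes it below -/
import Mathlib

section
/- Each of the eight operators S_{g1}, …, S_{g8} is a partial isometry (S S* S = S), and together they satisfy the Choi–Kraus normalization Σ_{k=1}^{8} S_{gk}* S_{gk} = 1, where 1 is the identity operator on H (this is the quantum-channel condition for the Hamiltonian path H₃ of G(Π₃)). -/
/- Hilbert space `H = ℓ²(ℕ₊, ℂ)` with standard orthonormal basis `(e m)` indexed by the
positive integers `ℕ+`. -/

noncomputable section

open ContinuousLinearMap

/-- The Hilbert space `ℓ²(ℕ₊, ℂ)` of square-summable complex sequences indexed by the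
positive integers. -/
abbrev H : Type := lp (fun _ : ℕ+ => ℂ) 2

/-- The standard orthonormal basis vector `e m` of `H`, for `m ≥ 1`. -/
def e (m : ℕ+) : H := lp.single 2 m 1

/-- `MapsBasis S a b` says that the bounded operator `S` sends the basis vector `e (a n)` to
`e (b n)` for every `n ≥ 1`, and sends to `0` every basis vector not of the form `e (a n)`;
i.e. `S = Σ_{n ≥ 1} E_{b n, a n}` as in the paper. -/
def MapsBasis (S : H →L[ℂ] H) (a b : ℕ+ → ℕ+) : Prop :=
  (∀ n : ℕ+, S (e (a n)) = e (b n)) ∧ ∀ m : ℕ+, (∀ n : ℕ+, m ≠ a n) → S (e m) = 0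

/-!
If a bounded operator `S` sends part of a Hilbert basis to an orthonormal family and kills the
remaining basis vectors, then `S* S` is the projection onto the part that survives, whence
`S S* S = S`. For several such operators `∑ₖ Sₖ* Sₖ` is therefore the identity as soon as the
surviving parts partition the basis. Here the index sets of the surviving parts are the eight
residue classes modulo `8`.
-/

open Set Function

section HilbertBasis

variable {ι κ 𝕜 E F : Type*} [RCLike 𝕜] [NormedAddCommGroup E] [InnerProductSpace 𝕜 E]
  [NormedAddCommGroup F] [InnerProductSpace 𝕜 F]

theorem clm_ext_hilbertBasis (v : HilbertBasis ι 𝕜 E) {A B : E →L[𝕜] F}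
    (h : ∀ i, A (v i) = B (v i)) : A = B :=
  ContinuousLinearMap.ext_on (Submodule.dense_iff_topologicalClosure_eq_top.2 v.dense_span)
    (forall_mem_range.2 h)

theorem ext_inner_hilbertBasis (v : HilbertBasis ι 𝕜 E) {x y : E}
    (h : ∀ i, inner 𝕜 (v i) x = inner 𝕜 (v i) y) : x = y :=
  v.repr.injective <| lp.ext <| funext fun i => by
    simpa only [v.repr_apply_apply] using h i

/-- `S` maps the basis vectors `v i`, `i ∈ s`, to an orthonormal family and kills all others, so
that it is a partial isometry whose initial space is the closed span of `v i`, `i ∈ s`. -/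
structure IsBasisPartialIsometry (v : HilbertBasis ι 𝕜 E) (s : Set ι) (S : E →L[𝕜] F) : Prop where
  orthonormal : Orthonormal 𝕜 fun i : s => S (v i)
  apply_eq_zero : ∀ i ∉ s, S (v i) = 0

namespace IsBasisPartialIsometry

variable [CompleteSpace E] [CompleteSpace F] {v : HilbertBasis ι 𝕜 E}

theorem adjoint_apply_apply {s : Set ι} {S : E →L[𝕜] F} (hS : IsBasisPartialIsometry v s S)
    (i : ι) : adjoint S (S (v i)) = s.indicator v i := by
  classical
  by_cases hi : i ∈ s
  · rw [indicator_of_mem hi]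
    refine ext_inner_hilbertBasis v fun j => ?_
    rw [adjoint_inner_right, orthonormal_iff_ite.1 v.orthonormal]
    by_cases hj : j ∈ s
    · simpa only [Subtype.mk.injEq] using orthonormal_iff_ite.1 hS.orthonormal ⟨j, hj⟩ ⟨i, hi⟩
    · rw [hS.apply_eq_zero j hj, inner_zero_left, if_neg (ne_of_mem_of_not_mem hi hj).symm]
  · rw [indicator_of_notMem hi, hS.apply_eq_zero i hi, map_zero]

theorem comp_adjoint_comp_self {s : Set ι} {S : E →L[𝕜] F} (hS : IsBasisPartialIsometry v s S) :
    S ∘L adjoint S ∘L S = S := by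
  refine clm_ext_hilbertBasis v fun i => ?_
  rw [ContinuousLinearMap.comp_apply, ContinuousLinearMap.comp_apply, hS.adjoint_apply_apply]
  by_cases hi : i ∈ s
  · rw [indicator_of_mem hi]
  · rw [indicator_of_notMem hi, map_zero, hS.apply_eq_zero i hi]

theorem sum_adjoint_comp_self_eq_one [Fintype κ] {s : κ → Set ι} {S : κ → E →L[𝕜] F}
    (hS : ∀ k, IsBasisPartialIsometry v (s k) (S k)) (hs : ∀ i, ∃! k, i ∈ s k) :
    ∑ k, adjoint (S k) ∘L S k = 1 := by
  refine clm_ext_hilbertBasis v fun i => ?_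
  obtain ⟨k, hik, hk_unique⟩ := hs i
  calc (∑ l, adjoint (S l) ∘L S l) (v i) = ∑ l, (s l).indicator v i := by
        simp only [sum_apply, ContinuousLinearMap.comp_apply, (hS _).adjoint_apply_apply]
    _ = (s k).indicator v i :=
        Fintype.sum_eq_single k fun l hl => indicator_of_notMem (mt (hk_unique l) hl) v
    _ = v i := indicator_of_mem hik v

end IsBasisPartialIsometry

end HilbertBasis

section ArithmeticProgressions

variable {c d : ℕ+}

theorem pnat_mul_sub_add (h : d < c) (n : ℕ+) : c * n - d + d = c * n :=
  PNat.sub_add_of_lt (h.trans_le (le_mul_of_one_le_right' one_le))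

theorem injective_pnat_mul_sub (h : d < c) : Injective fun n : ℕ+ => c * n - d := by
  intro m n hmn
  apply mul_left_cancel (a := c)
  rw [← pnat_mul_sub_add h m, ← pnat_mul_sub_add h n]
  exact congrArg (· + d) hmn

theorem range_pnat_mul (c : ℕ+) :
    range (fun n : ℕ+ => c * n) = {m : ℕ+ | ((m : ℕ) : ZMod c) = 0} := by
  ext m
  rw [mem_ofPred_eq, ZMod.natCast_eq_zero_iff, ← PNat.dvd_iff]
  exact exists_congr fun n => eq_comm

theorem range_pnat_mul_sub (h : d < c) :
    range (fun n : ℕ+ => c * n - d) = {m : ℕ+ | ((m : ℕ) : ZMod c) = -(d : ℕ)} := by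
  ext m
  rw [mem_ofPred_eq, eq_neg_iff_add_eq_zero, ← Nat.cast_add, ZMod.natCast_eq_zero_iff,
    ← PNat.add_coe, ← PNat.dvd_iff]
  refine exists_congr fun n => ?_
  rw [← pnat_mul_sub_add h n, add_left_inj, eq_comm]

end ArithmeticProgressions

/-- The vectors `e m` as a Hilbert basis of `H`; its coordinate map is the identity. -/
def standardBasis : HilbertBasis ℕ+ ℂ H := .ofRepr (.refl ℂ H)

theorem standardBasis_apply (m : ℕ+) : standardBasis m = e m :=
  (standardBasis.repr_symm_single m).symm

theorem orthonormal_e : Orthonormal ℂ e :=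
  funext standardBasis_apply ▸ standardBasis.orthonormal

namespace MapsBasis

variable {S : H →L[ℂ] H} {a b : ℕ+ → ℕ+} {c d : ℕ+}

theorem isBasisPartialIsometry (hS : MapsBasis S a b) (hb : Injective b) :
    IsBasisPartialIsometry standardBasis (range a) S where
  orthonormal := by
    have apply_e : ∀ i : range a, S (standardBasis i) = e (b (rangeSplitting a i)) := fun i => by
      rw [standardBasis_apply, ← hS.1, apply_rangeSplitting a]
    rw [funext apply_e]
    exact orthonormal_e.comp _ (hb.comp (rangeSplitting_injective a))
  apply_eq_zero m hm := by
    rw [standardBasis_apply]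
    exact hS.2 m fun n hmn => hm ⟨n, hmn.symm⟩

theorem isBasisPartialIsometry_mul (hS : MapsBasis S (fun n => c * n) b) (hb : Injective b) :
    IsBasisPartialIsometry standardBasis {m : ℕ+ | ((m : ℕ) : ZMod c) = 0} S :=
  range_pnat_mul c ▸ hS.isBasisPartialIsometry hb

theorem isBasisPartialIsometry_mul_sub (hS : MapsBasis S (fun n => c * n - d) b) (hdc : d < c)
    (hb : Injective b) :
    IsBasisPartialIsometry standardBasis {m : ℕ+ | ((m : ℕ) : ZMod c) = -(d : ℕ)} S :=
  range_pnat_mul_sub hdc ▸ hS.isBasisPartialIsometry hb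

end MapsBasis

/-- Each of `S_{g1}, …, S_{g8}` is a partial isometry and `Σₖ S_{gk}* S_{gk} = 1` (the quantum-channel condition for the Hamiltonian path `H₃` of `G(Π₃)`). -/
theorem stmt_12
    (Sg1 Sg2 Sg3 Sg4 Sg5 Sg6 Sg7 Sg8 : H →L[ℂ] H)
    (hSg1 : MapsBasis Sg1 (fun n => 8 * n - 1) (fun n => 32 * n - 23))
    (hSg2 : MapsBasis Sg2 (fun n => 8 * n) (fun n => 40 * n - 25))
    (hSg3 : MapsBasis Sg3 (fun n => 8 * n - 3) (fun n => 40 * n - 24))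
    (hSg4 : MapsBasis Sg4 (fun n => 8 * n - 2) (fun n => 48 * n - 35))
    (hSg5 : MapsBasis Sg5 (fun n => 8 * n - 4) (fun n => 48 * n - 34))
    (hSg6 : MapsBasis Sg6 (fun n => 8 * n - 5) (fun n => 24 * n - 14))
    (hSg7 : MapsBasis Sg7 (fun n => 8 * n - 6) (fun n => 32 * n - 20))
    (hSg8 : MapsBasis Sg8 (fun n => 8 * n - 7) (fun n => 24 * n - 13)) :
    (Sg1 ∘L adjoint Sg1 ∘L Sg1 = Sg1 ∧
    Sg2 ∘L adjoint Sg2 ∘L Sg2 = Sg2 ∧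
    Sg3 ∘L adjoint Sg3 ∘L Sg3 = Sg3 ∧
    Sg4 ∘L adjoint Sg4 ∘L Sg4 = Sg4 ∧
    Sg5 ∘L adjoint Sg5 ∘L Sg5 = Sg5 ∧
    Sg6 ∘L adjoint Sg6 ∘L Sg6 = Sg6 ∧
    Sg7 ∘L adjoint Sg7 ∘L Sg7 = Sg7 ∧
    Sg8 ∘L adjoint Sg8 ∘L Sg8 = Sg8) ∧
    adjoint Sg1 ∘L Sg1 + adjoint Sg2 ∘L Sg2 + adjoint Sg3 ∘L Sg3 + adjoint Sg4 ∘L Sg4 + adjoint Sg5 ∘L Sg5 + adjoint Sg6 ∘L Sg6 + adjoint Sg7 ∘L Sg7 + adjoint Sg8 ∘L Sg8 = 1 := by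
  let S : Fin 8 → H →L[ℂ] H := ![Sg1, Sg2, Sg3, Sg4, Sg5, Sg6, Sg7, Sg8]
  let residue : Fin 8 → ZMod 8 := ![-1, 0, -3, -2, -4, -5, -6, -7]
  have hS : ∀ k, IsBasisPartialIsometry standardBasis
      {m : ℕ+ | ((m : ℕ) : ZMod 8) = residue k} (S k) := by
    intro k
    fin_cases k
    · exact hSg1.isBasisPartialIsometry_mul_sub (by decide) (injective_pnat_mul_sub (by decide))
    · exact hSg2.isBasisPartialIsometry_mul (injective_pnat_mul_sub (by decide))
    · exact hSg3.isBasisPartialIsometry_mul_sub (by decide) (injective_pnat_mul_sub (by decide))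
    · exact hSg4.isBasisPartialIsometry_mul_sub (by decide) (injective_pnat_mul_sub (by decide))
    · exact hSg5.isBasisPartialIsometry_mul_sub (by decide) (injective_pnat_mul_sub (by decide))
    · exact hSg6.isBasisPartialIsometry_mul_sub (by decide) (injective_pnat_mul_sub (by decide))
    · exact hSg7.isBasisPartialIsometry_mul_sub (by decide) (injective_pnat_mul_sub (by decide))
    · exact hSg8.isBasisPartialIsometry_mul_sub (by decide) (injective_pnat_mul_sub (by decide))
  have residue_bijective : Bijective residue := by decide
  have partial_isometry := fun k => (hS k).comp_adjoint_comp_self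
  have sum_eq_one := IsBasisPartialIsometry.sum_adjoint_comp_self_eq_one hS fun m => by
    simpa only [mem_ofPred_eq, eq_comm] using residue_bijective.existsUnique (m : ℕ)
  rw [Fin.sum_univ_eight] at sum_eq_one
  exact ⟨⟨partial_isometry 0, partial_isometry 1, partial_isometry 2, partial_isometry 3,
    partial_isometry 4, partial_isometry 5, partial_isometry 6, partial_isometry 7⟩, sum_eq_one⟩
end
end

section
/- Each of the eight operators S_{i1}, …, S_{i8} is a partial isometry (S S* S = S), and together they satisfy the Choi–Kraus normalization Σ_{k=1}^{8} S_{ik}* S_{ik} = 1, where 1 is the identity operator on H (this is the quantum-channel condition for the Hamiltonian path H₅ of G(Π₃)). -/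
/- Hilbert space `H = ℓ²(ℕ₊, ℂ)` with standard orthonormal basis `(e m)` indexed by the
positive integers `ℕ+`. -/

noncomputable section

open ContinuousLinearMap

/-! Each `S = Σₙ E_{b n, a n}` with `b` injective has adjoint `Σₙ E_{a n, b n}`. Composing,
`S* S = Σₙ E_{a n, a n}` is the projection onto the span of the `e (a n)`, and `S S* S` acts on
the basis as `S` does. The eight column index sets are the residue classes modulo `8`, so these
projections sum to the identity. -/

theorem inner_e_left (m : ℕ+) (x : H) : inner ℂ (e m) x = x m := by
  simp [e, lp.inner_single_left]

theorem inner_e_e (k m : ℕ+) : inner ℂ (e k) (e m) = if k = m then (1 : ℂ) else 0 := by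
  rw [inner_e_left, e, lp.single_apply, Pi.single_apply]

theorem e_injective : Function.Injective e := by
  intro k m hkm
  by_contra hne
  have hinner := inner_e_e k m
  rw [hkm, inner_e_e, if_pos rfl, if_neg hne] at hinner
  exact one_ne_zero hinner

theorem eq_of_forall_inner_e_left {x y : H} (h : ∀ m, inner ℂ (e m) x = inner ℂ (e m) y) :
    x = y := by
  ext m
  rw [← inner_e_left, h, inner_e_left]

theorem clm_ext_e {F : Type*} [NormedAddCommGroup F] [NormedSpace ℂ F] {S T : H →L[ℂ] F}
    (h : ∀ m, S (e m) = T (e m)) : S = T :=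
  lp.ext_continuousLinearMap (by simp) fun m => ContinuousLinearMap.ext_ring (h m)

namespace MapsBasis

variable {S T : H →L[ℂ] H} {a b c : ℕ+ → ℕ+}

theorem apply_of_notMem_range (hS : MapsBasis S a b) {m : ℕ+} (hm : m ∉ Set.range a) :
    S (e m) = 0 :=
  hS.2 m fun n hn => hm ⟨n, hn.symm⟩

protected theorem unique (hS : MapsBasis S a b) (hT : MapsBasis T a b) : S = T := by
  refine clm_ext_e fun m => ?_
  by_cases hm : m ∈ Set.range a
  · obtain ⟨n, rfl⟩ := hm
    rw [hS.1, hT.1]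
  · rw [hS.apply_of_notMem_range hm, hT.apply_of_notMem_range hm]

protected theorem comp (hT : MapsBasis T b c) (hS : MapsBasis S a b) : MapsBasis (T ∘L S) a c :=
  ⟨fun n => by rw [comp_apply, hS.1, hT.1], fun m hm => by rw [comp_apply, hS.2 m hm, map_zero]⟩

theorem injective_source (hS : MapsBasis S a b) (hb : Function.Injective b) :
    Function.Injective a := fun i j hij =>
  hb <| e_injective <| by rw [← hS.1, ← hS.1, hij]

protected theorem adjoint (hS : MapsBasis S a b) (hb : Function.Injective b) :
    MapsBasis (adjoint S) b a := by
  have ha := hS.injective_source hb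
  constructor
  · refine fun n => eq_of_forall_inner_e_left fun k => ?_
    rw [adjoint_inner_right]
    by_cases hk : k ∈ Set.range a
    · obtain ⟨j, rfl⟩ := hk
      simp only [hS.1, inner_e_e, ha.eq_iff, hb.eq_iff]
    · have hkn : k ≠ a n := fun h => hk ⟨n, h.symm⟩
      rw [hS.apply_of_notMem_range hk, inner_zero_left, inner_e_e, if_neg hkn]
  · refine fun m hm => eq_of_forall_inner_e_left fun k => ?_
    rw [adjoint_inner_right, inner_zero_right]
    by_cases hk : k ∈ Set.range a
    · obtain ⟨j, rfl⟩ := hk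
      rw [hS.1, inner_e_e, if_neg (hm j).symm]
    · rw [hS.apply_of_notMem_range hk, inner_zero_left]

theorem comp_adjoint_comp_self (hS : MapsBasis S a b) (hb : Function.Injective b) :
    S ∘L adjoint S ∘L S = S :=
  (hS.comp ((hS.adjoint hb).comp hS)).unique hS

theorem sum_adjoint_comp_self {ι : Type*} [Fintype ι] {S : ι → H →L[ℂ] H} {a b : ι → ℕ+ → ℕ+}
    (hS : ∀ i, MapsBasis (S i) (a i) (b i)) (hb : ∀ i, Function.Injective (b i))
    (ha : ∀ m, ∃! i, m ∈ Set.range (a i)) :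
    ∑ i, adjoint (S i) ∘L S i = 1 := by
  have hproj : ∀ i, MapsBasis (adjoint (S i) ∘L S i) (a i) (a i) :=
    fun i => ((hS i).adjoint (hb i)).comp (hS i)
  refine clm_ext_e fun m => ?_
  obtain ⟨i, ⟨n, rfl⟩, hunique⟩ := ha m
  have hother : ∀ j ≠ i, (adjoint (S j) ∘L S j) (e (a i n)) = 0 :=
    fun j hj => (hproj j).apply_of_notMem_range fun hmem => hj (hunique j hmem)
  rw [sum_apply, Fintype.sum_eq_single i hother, (hproj i).1, one_apply_eq_self]

end MapsBasis

theorem coe_mul_sub_add {q r : ℕ+} (hr : r < q) (n : ℕ+) :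
    ((q * n - r : ℕ+) : ℕ) + r = q * n := by
  have hlt : r < q * n := hr.trans_le (le_mul_of_one_le_right' one_le)
  exact_mod_cast PNat.sub_add_of_lt hlt

theorem mul_sub_injective {q r : ℕ+} (hr : r < q) :
    Function.Injective fun n : ℕ+ => q * n - r := by
  intro m n hmn
  refine mul_right_injective q (PNat.eq ?_)
  simpa only [PNat.mul_coe, coe_mul_sub_add hr] using congrArg (fun k : ℕ+ => (k : ℕ) + r) hmn

theorem mem_range_iff_dvd_add {q d : ℕ} {f : ℕ+ → ℕ+} (hf : ∀ n, (f n : ℕ) + d = q * n) (m : ℕ+) :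
    m ∈ Set.range f ↔ q ∣ m + d := by
  constructor
  · rintro ⟨n, rfl⟩
    exact ⟨n, hf n⟩
  · rintro ⟨n, hn⟩
    have hn_pos : 0 < n := Nat.pos_of_ne_zero fun h => by simp [h] at hn
    exact ⟨⟨n, hn_pos⟩, PNat.eq (Nat.add_right_cancel ((hf _).trans hn.symm))⟩

theorem existsUnique_mem_range_of_bijective {ι : Type*} {q : ℕ} {d : ι → ℕ} {f : ι → ℕ+ → ℕ+}
    (hf : ∀ i n, (f i n : ℕ) + d i = q * n)
    (hd : Function.Bijective fun i => (d i : ZMod q)) (m : ℕ+) :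
    ∃! i, m ∈ Set.range (f i) := by
  have hmem : ∀ i, m ∈ Set.range (f i) ↔ (d i : ZMod q) = -(m : ℕ) := fun i => by
    rw [mem_range_iff_dvd_add (hf i), ← ZMod.natCast_eq_zero_iff, Nat.cast_add, add_comm,
      add_eq_zero_iff_eq_neg]
  simpa only [hmem] using hd.existsUnique (-(m : ℕ))

/-- Each of `S_{i1}, …, S_{i8}` is a partial isometry and `Σₖ S_{ik}* S_{ik} = 1` (the quantum-channel condition for the Hamiltonian path `H₅` of `G(Π₃)`). -/
theorem stmt_13
    (Si1 Si2 Si3 Si4 Si5 Si6 Si7 Si8 : H →L[ℂ] H)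
    (hSi1 : MapsBasis Si1 (fun n => 8 * n - 2) (fun n => 32 * n - 7))
    (hSi2 : MapsBasis Si2 (fun n => 8 * n - 3) (fun n => 48 * n - 42))
    (hSi3 : MapsBasis Si3 (fun n => 8 * n - 1) (fun n => 48 * n - 27))
    (hSi4 : MapsBasis Si4 (fun n => 8 * n) (fun n => 40 * n - 25))
    (hSi5 : MapsBasis Si5 (fun n => 8 * n - 4) (fun n => 40 * n - 8))
    (hSi6 : MapsBasis Si6 (fun n => 8 * n - 5) (fun n => 32 * n - 28))
    (hSi7 : MapsBasis Si7 (fun n => 8 * n - 6) (fun n => 24 * n - 21))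
    (hSi8 : MapsBasis Si8 (fun n => 8 * n - 7) (fun n => 24 * n - 22)) :
    (Si1 ∘L adjoint Si1 ∘L Si1 = Si1 ∧
    Si2 ∘L adjoint Si2 ∘L Si2 = Si2 ∧
    Si3 ∘L adjoint Si3 ∘L Si3 = Si3 ∧
    Si4 ∘L adjoint Si4 ∘L Si4 = Si4 ∧
    Si5 ∘L adjoint Si5 ∘L Si5 = Si5 ∧
    Si6 ∘L adjoint Si6 ∘L Si6 = Si6 ∧
    Si7 ∘L adjoint Si7 ∘L Si7 = Si7 ∧
    Si8 ∘L adjoint Si8 ∘L Si8 = Si8) ∧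
    adjoint Si1 ∘L Si1 + adjoint Si2 ∘L Si2 + adjoint Si3 ∘L Si3 + adjoint Si4 ∘L Si4 + adjoint Si5 ∘L Si5 + adjoint Si6 ∘L Si6 + adjoint Si7 ∘L Si7 + adjoint Si8 ∘L Si8 = 1 := by
  let S : Fin 8 → H →L[ℂ] H := ![Si1, Si2, Si3, Si4, Si5, Si6, Si7, Si8]
  let d : Fin 8 → ℕ := ![2, 3, 1, 0, 4, 5, 6, 7]
  let a : Fin 8 → ℕ+ → ℕ+ := ![fun n => 8 * n - 2, fun n => 8 * n - 3, fun n => 8 * n - 1,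
    fun n => 8 * n, fun n => 8 * n - 4, fun n => 8 * n - 5, fun n => 8 * n - 6, fun n => 8 * n - 7]
  let q : Fin 8 → ℕ+ := ![32, 48, 48, 40, 40, 32, 24, 24]
  let r : Fin 8 → ℕ+ := ![7, 42, 27, 25, 8, 28, 21, 22]
  have hS : ∀ i, MapsBasis (S i) (a i) (fun n => q i * n - r i) := by
    intro i
    fin_cases i <;> assumption
  have hb : ∀ i, Function.Injective fun n => q i * n - r i := fun i =>
    mul_sub_injective ((by decide : ∀ i, r i < q i) i)
  have ha : ∀ i n, (a i n : ℕ) + d i = 8 * n := by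
    intro i n
    fin_cases i <;> first | rfl | exact coe_mul_sub_add (q := 8) (by decide) n
  have hisom : ∀ i, S i ∘L adjoint (S i) ∘L S i = S i := fun i =>
    (hS i).comp_adjoint_comp_self (hb i)
  have hpartition := existsUnique_mem_range_of_bijective ha (by decide)
  refine ⟨⟨hisom 0, hisom 1, hisom 2, hisom 3, hisom 4, hisom 5, hisom 6, hisom 7⟩, ?_⟩
  have hsum := MapsBasis.sum_adjoint_comp_self hS hb hpartition
  rwa [Fin.sum_univ_eight] at hsum
end
end
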